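/- Lower bound for the natural pseudo-distance: Let (M,φ) and (N,ψ) be size pairs with M and N homeomorphic. Then d_match(ℓ*_{(M,φ)}, ℓ*_{(N,ψ)}) ≤ inf_h max_{P∈M} |φ(P) − ψ(h(P))|, where h ranges over all homeomorphisms from M to N. -/

import Mathlib

open Set Topology
open scoped ENNReal

noncomputable def rsf {M : Type*} [TopologicalSpace M] (φ : M → ℝ) (x y : ℝ) : ℕ :=
  Set.ncard {C : Set M | ∃ P, φ P ≤ x ∧ C = connectedComponentIn {Q | φ Q ≤ y} P}

noncomputable def mult {M : Type*} [TopologicalSpace M] (φ : M → ℝ) (p : ℝ × ℝ) : ℤ :=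
  sInf {z : ℤ | ∃ ε : ℝ, 0 < ε ∧ p.1 + ε < p.2 - ε ∧
    z = (rsf φ (p.1 + ε) (p.2 - ε) : ℤ) - (rsf φ (p.1 - ε) (p.2 - ε) : ℤ)
      - (rsf φ (p.1 + ε) (p.2 + ε) : ℤ) + (rsf φ (p.1 - ε) (p.2 + ε) : ℤ)}

noncomputable def multInf {M : Type*} [TopologicalSpace M] (φ : M → ℝ) (k : ℝ) : ℤ :=
  sInf {z : ℤ | ∃ ε : ℝ, 0 < ε ∧ k + ε < 1 / ε ∧
    z = (rsf φ (k + ε) (1 / ε) : ℤ) - (rsf φ (k - ε) (1 / ε) : ℤ)}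

open scoped Classical in
noncomputable def eDist (p q : ℝ × EReal) : ℝ≥0∞ :=
  if p.2 = ⊤ ∧ q.2 = ⊤ then ENNReal.ofReal |p.1 - q.1|
  else if p.2 = ⊤ ∨ q.2 = ⊤ then ⊤
  else ENNReal.ofReal (min (max |p.1 - q.1| |p.2.toReal - q.2.toReal|)
    (max ((p.2.toReal - p.1) / 2) ((q.2.toReal - q.1) / 2)))

def IsRepSeq {M : Type*} [TopologicalSpace M] (φ : M → ℝ) (a : ℕ → ℝ × EReal) : Prop :=
  (∃ k : ℝ, a 0 = (k, ⊤) ∧ 0 < multInf φ k) ∧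
  (∀ i : ℕ, 0 < i →
    (∃ x y : ℝ, a i = (x, (y : EReal)) ∧ x < y ∧ 0 < mult φ (x, y)) ∨
    (∃ x : ℝ, a i = (x, (x : EReal)))) ∧
  (∀ x y : ℝ, x < y → 0 < mult φ (x, y) →
    Set.ncard {i : ℕ | a i = (x, (y : EReal))} = (mult φ (x, y)).toNat) ∧
  {i : ℕ | ∃ x : ℝ, a i = (x, (x : EReal))}.Infinite

noncomputable def dMatchSeq (a b : ℕ → ℝ × EReal) : ℝ≥0∞ :=
  ⨅ σ : {σ : ℕ → ℕ // Function.Bijective σ}, ⨆ i : ℕ, eDist (a i) (b (σ.1 i))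

noncomputable def dMatch {M N : Type*} [TopologicalSpace M] [TopologicalSpace N]
    (φ : M → ℝ) (ψ : N → ℝ) : ℝ≥0∞ :=
  sInf {s : ℝ≥0∞ | ∃ a b, IsRepSeq φ a ∧ IsRepSeq ψ b ∧ s = dMatchSeq a b}

/-! ### Counting connected components -/

/-- Number of connected components of `B` meeting `A`. -/
noncomputable def ncomp {M : Type*} [TopologicalSpace M] (A B : Set M) : ℕ :=
  Set.ncard (connectedComponentIn B '' A)

lemma rsf_eq_ncomp {M : Type*} [TopologicalSpace M] (φ : M → ℝ) (x y : ℝ) :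
    rsf φ x y = ncomp {Q | φ Q ≤ x} {Q | φ Q ≤ y} := by
  unfold rsf ncomp
  congr 1
  ext C
  simp only [Set.mem_ofPred_eq, Set.mem_image]
  constructor
  · rintro ⟨P, h, rfl⟩; exact ⟨P, h, rfl⟩
  · rintro ⟨P, h, rfl⟩; exact ⟨P, h, rfl⟩

lemma comp_mono_eq {M : Type*} [TopologicalSpace M] {B B' : Set M} (hB : B ⊆ B') {P Q : M}
    (hP : P ∈ B) (h : connectedComponentIn B P = connectedComponentIn B Q) :
    connectedComponentIn B' P = connectedComponentIn B' Q := by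
  have h1 : P ∈ connectedComponentIn B Q := h ▸ mem_connectedComponentIn hP
  exact (connectedComponentIn_eq (connectedComponentIn_mono Q hB h1)).symm

lemma ncomp_box {M : Type*} [TopologicalSpace M] {A A' B B' : Set M} (hA : A ⊆ A')
    (hAB : A' ⊆ B) (hB : B ⊆ B') (hfin : (connectedComponentIn B '' A').Finite) :
    (ncomp A' B' : ℤ) + ncomp A B ≤ ncomp A' B + ncomp A B' := by
  rcases isEmpty_or_nonempty M with hM | hM
  · simp [ncomp, Set.eq_empty_of_isEmpty A, Set.eq_empty_of_isEmpty A']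
  have key : ∀ C ∈ connectedComponentIn B' '' A' \ connectedComponentIn B' '' A,
      ∃ P, P ∈ A' ∧ connectedComponentIn B' P = C ∧
        connectedComponentIn B P ∈ connectedComponentIn B '' A' \ connectedComponentIn B '' A := by
    rintro C ⟨⟨P, hP, rfl⟩, hC⟩
    refine ⟨P, hP, rfl, ⟨P, hP, rfl⟩, ?_⟩
    rintro ⟨Q, hQ, hQP⟩
    exact hC ⟨Q, hQ, comp_mono_eq hB (hAB (hA hQ)) hQP⟩
  choose! f hf1 hf2 hf3 using key
  have hle : (connectedComponentIn B' '' A' \ connectedComponentIn B' '' A).ncard ≤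
      (connectedComponentIn B '' A' \ connectedComponentIn B '' A).ncard := by
    refine Set.ncard_le_ncard_of_injOn (fun C => connectedComponentIn B (f C)) hf3 ?_
      (hfin.subset Set.sdiff_subset)
    intro C hC C' hC' h
    rw [← hf2 C hC, ← hf2 C' hC']
    exact comp_mono_eq hB (hAB (hf1 C hC)) h
  have hfin' : (connectedComponentIn B' '' A').Finite := by
    have key2 : ∀ C ∈ connectedComponentIn B' '' A', ∃ P ∈ A', connectedComponentIn B' P = C :=
      fun C h => h
    choose! f hf1 hf2 using key2
    refine Set.Finite.of_injOn (f := fun C => connectedComponentIn B (f C))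
      (t := connectedComponentIn B '' A') ?_ ?_ hfin
    · intro C hC; exact ⟨_, hf1 C hC, rfl⟩
    · intro C hC C' hC' h
      rw [← hf2 C hC, ← hf2 C' hC']
      exact comp_mono_eq hB (hAB (hf1 C hC)) h
  have e1 := Set.ncard_sdiff_add_ncard_of_subset (Set.image_mono (f := connectedComponentIn B) hA) hfin
  have e2 := Set.ncard_sdiff_add_ncard_of_subset (Set.image_mono (f := connectedComponentIn B') hA) hfin'
  unfold ncomp
  omega

lemma comp_finite {M : Type*} [TopologicalSpace M] [LocallyConnectedSpace M] {A B : Set M}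
    (hA : IsCompact A) (hAB : A ⊆ interior B) : (connectedComponentIn B '' A).Finite := by
  have h : ∀ P ∈ A, ∃ U, IsOpen U ∧ P ∈ U ∧ IsPreconnected U ∧ U ⊆ B := by
    intro P hP
    refine ⟨connectedComponentIn (interior B) P, isOpen_interior.connectedComponentIn,
      mem_connectedComponentIn (hAB hP), isPreconnected_connectedComponentIn,
      (connectedComponentIn_subset _ _).trans interior_subset⟩
  choose! U hU1 hU2 hU3 hU4 using h
  obtain ⟨t, hc⟩ := hA.elim_nhds_subcover' (fun P _ => U P)
    (fun P hP => (hU1 P hP).mem_nhds (hU2 P hP))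
  refine ((t.finite_toSet).image (fun P : A => connectedComponentIn B (P : M))).subset ?_
  rintro C ⟨Q, hQ, rfl⟩
  have := hc hQ
  simp only [Set.mem_iUnion] at this
  obtain ⟨P, hPt, hQU⟩ := this
  refine ⟨P, hPt, ?_⟩
  exact connectedComponentIn_eq
    ((hU3 P P.2).subset_connectedComponentIn (hU2 P P.2) (hU4 P P.2) hQU)

/-! ### Abstract rank functions -/

structure RK (G : ℝ → ℝ → ℤ) : Prop where
  box : ∀ x x' y y', x ≤ x' → x' < y → y ≤ y' → G x' y' + G x y ≤ G x' y + G x y'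
  hi : ∃ Y, ∀ x y, x < y → Y ≤ y → G x y = 0
  lo : ∃ X, ∀ x y, x < y → x ≤ X → G x y = 0

lemma RK.refl' {G : ℝ → ℝ → ℤ} (h : RK G) : RK (fun x y => G (-y) (-x)) := by
  refine ⟨?_, ?_, ?_⟩
  · intro x x' y y' h1 h2 h3
    have := h.box (-y') (-y) (-x') (-x) (by linarith) (by linarith) (by linarith)
    linarith
  · obtain ⟨X, hX⟩ := h.lo
    exact ⟨-X, fun x y h1 h2 => hX _ _ (by linarith) (by linarith)⟩
  · obtain ⟨X, hX⟩ := h.hi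
    exact ⟨-X, fun x y h1 h2 => hX _ _ (by linarith) (by linarith)⟩

lemma RK.mono {G : ℝ → ℝ → ℤ} (h : RK G) {x x' y : ℝ} (h1 : x ≤ x') (h2 : x' < y) :
    G x y ≤ G x' y := by
  obtain ⟨Y, hY⟩ := h.hi
  have := h.box x x' y (max y Y) h1 h2 (le_max_left _ _)
  rw [hY x' (max y Y) (h2.trans_le (le_max_left _ _)) (le_max_right _ _),
    hY x (max y Y) ((h1.trans_lt h2).trans_le (le_max_left _ _)) (le_max_right _ _)] at this
  linarith

lemma evconst {f : ℝ → ℤ} {c : ℝ} (hc : 0 < c)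
    (hm : ∀ ε ε', 0 < ε → ε ≤ ε' → ε' < c → f ε ≤ f ε') (h0 : ∀ ε, 0 < ε → ε < c → 0 ≤ f ε) :
    ∃ v, 0 ≤ v ∧ IsLeast {z | ∃ ε, 0 < ε ∧ ε < c ∧ z = f ε} v ∧ ∀ᶠ ε in 𝓝[>] (0 : ℝ), f ε = v := by
  classical
  have hne : ∃ n : ℕ, ∃ ε, 0 < ε ∧ ε < c ∧ (n : ℤ) = f ε :=
    ⟨(f (c / 2)).toNat, c / 2, by linarith, by linarith,
      Int.toNat_of_nonneg (h0 _ (by linarith) (by linarith))⟩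
  obtain ⟨ε0, h1, h2, h3⟩ := Nat.find_spec hne
  have hmin : ∀ ε, 0 < ε → ε < c → (Nat.find hne : ℤ) ≤ f ε := by
    intro ε e1 e2
    have := Nat.find_min' hne (m := (f ε).toNat) ⟨ε, e1, e2, Int.toNat_of_nonneg (h0 _ e1 e2)⟩
    have := h0 _ e1 e2
    omega
  refine ⟨Nat.find hne, by positivity, ⟨⟨ε0, h1, h2, h3⟩, ?_⟩, ?_⟩
  · rintro z ⟨ε, e1, e2, rfl⟩; exact hmin _ e1 e2
  · filter_upwards [Ioo_mem_nhdsGT h1] with ε hε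
    refine le_antisymm ?_ (hmin _ hε.1 (hε.2.trans h2))
    rw [h3]; exact hm _ _ hε.1 hε.2.le h2

/-- number of bars born at `b` that are alive at `y` -/
noncomputable def gg (G : ℝ → ℝ → ℤ) (b y : ℝ) : ℤ :=
  sInf {z | ∃ ε, 0 < ε ∧ ε < y - b ∧ z = G (b + ε) y - G (b - ε) y}

/-- multiplicity of a point -/
noncomputable def mm (G : ℝ → ℝ → ℤ) (b d : ℝ) : ℤ :=
  sInf {z | ∃ ε, 0 < ε ∧ ε < (d - b) / 2 ∧ z =
    G (b + ε) (d - ε) - G (b - ε) (d - ε) - G (b + ε) (d + ε) + G (b - ε) (d + ε)}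

lemma gg_spec {G : ℝ → ℝ → ℤ} (h : RK G) {b y : ℝ} (hby : b < y) :
    0 ≤ gg G b y ∧ ∀ᶠ ε in 𝓝[>] (0 : ℝ), G (b + ε) y - G (b - ε) y = gg G b y := by
  obtain ⟨v, hv0, hv1, hv2⟩ := evconst (f := fun ε => G (b + ε) y - G (b - ε) y) (c := y - b)
    (by linarith)
    (by
      intro ε ε' h1 h2 h3
      have := h.mono (x := b + ε) (x' := b + ε') (y := y) (by linarith) (by linarith)
      have := h.mono (x := b - ε') (x' := b - ε) (y := y) (by linarith) (by linarith)
      linarith)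
    (by
      intro ε h1 h2
      have := h.mono (x := b - ε) (x' := b + ε) (y := y) (by linarith) (by linarith)
      linarith)
  have : gg G b y = v := hv1.csInf_eq
  rw [this]; exact ⟨hv0, hv2⟩

lemma mm_spec {G : ℝ → ℝ → ℤ} (h : RK G) {b d : ℝ} (hbd : b < d) :
    0 ≤ mm G b d ∧ ∀ᶠ ε in 𝓝[>] (0 : ℝ),
    G (b + ε) (d - ε) - G (b - ε) (d - ε) - G (b + ε) (d + ε) + G (b - ε) (d + ε) = mm G b d := by
  obtain ⟨v, hv0, hv1, hv2⟩ := evconst (f := fun ε =>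
    G (b + ε) (d - ε) - G (b - ε) (d - ε) - G (b + ε) (d + ε) + G (b - ε) (d + ε))
    (c := (d - b) / 2)
    (by linarith)
    (by
      intro ε ε' h1 h2 h3
      have := h.box (b + ε) (b + ε') (d - ε') (d + ε') (by linarith) (by linarith) (by linarith)
      have := h.box (b - ε') (b - ε) (d - ε') (d + ε') (by linarith) (by linarith) (by linarith)
      have := h.box (b - ε) (b + ε) (d - ε') (d - ε) (by linarith) (by linarith) (by linarith)
      have := h.box (b - ε) (b + ε) (d + ε) (d + ε') (by linarith) (by linarith) (by linarith)
      linarith)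
    (by
      intro ε h1 h2
      have := h.box (b - ε) (b + ε) (d - ε) (d + ε) (by linarith) (by linarith) (by linarith)
      linarith)
  have : mm G b d = v := hv1.csInf_eq
  rw [this]; exact ⟨hv0, hv2⟩

lemma gg_anti {G : ℝ → ℝ → ℤ} (h : RK G) {b y y' : ℝ} (hby : b < y) (hy : y ≤ y') :
    gg G b y' ≤ gg G b y := by
  obtain ⟨ε, ⟨h1, h2⟩, h3⟩ := ((gg_spec h hby).2.and (gg_spec h (hby.trans_le hy)).2 |>.and
    (Ioo_mem_nhdsGT (show (0 : ℝ) < y - b by linarith))).exists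
  have := h.box (b - ε) (b + ε) y y' (by linarith [h3.1]) (by linarith [h3.2]) hy
  linarith

lemma gg_zero {G : ℝ → ℝ → ℤ} (h : RK G) : ∃ Y, ∀ b y, b < y → Y ≤ y → gg G b y = 0 := by
  obtain ⟨Y, hY⟩ := h.hi
  refine ⟨Y, fun b y hb hy => ?_⟩
  obtain ⟨ε, h1, h3⟩ := ((gg_spec h hb).2.and
    (Ioo_mem_nhdsGT (show (0 : ℝ) < y - b by linarith))).exists
  rw [← h1, hY _ _ (by linarith [h3.2]) hy, hY _ _ (by linarith [h3.1]) hy]; rfl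

lemma mm_eq {G : ℝ → ℝ → ℤ} (h : RK G) {b d : ℝ} (hbd : b < d) :
    ∃ p q : ℤ, 0 ≤ q ∧ q ≤ p ∧ mm G b d = p - q ∧ (∀ᶠ η in 𝓝[>] (0 : ℝ), gg G b (d - η) = p) ∧
      (∀ᶠ η in 𝓝[>] (0 : ℝ), gg G b (d + η) = q) := by
  obtain ⟨p, hp0, -, hp⟩ := evconst (f := fun η => gg G b (d - η)) (c := d - b) (by linarith)
    (fun ε ε' h1 h2 h3 => gg_anti h (by linarith) (by linarith))
    (fun ε h1 h2 => (gg_spec h (by linarith)).1)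
  obtain ⟨Y, hY⟩ := gg_zero h
  obtain ⟨q', hq0, -, hq⟩ := evconst (f := fun η => gg G b d - gg G b (d + η)) (c := d - b)
    (by linarith)
    (fun ε ε' h1 h2 h3 => by
      have := gg_anti h (b := b) (y := d + ε) (y' := d + ε') (by linarith) (by linarith)
      linarith)
    (fun ε h1 h2 => by
      have := gg_anti h (b := b) (y := d) (y' := d + ε) (by linarith) (by linarith)
      linarith)
  have hq' : ∀ᶠ η in 𝓝[>] (0 : ℝ), gg G b (d + η) = gg G b d - q' := by
    filter_upwards [hq] with η h; linarith
  have hdb : (0 : ℝ) < (d - b) / 2 := by linarith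
  refine ⟨p, gg G b d - q', ?_, ?_, ?_, hp, hq'⟩
  · obtain ⟨η, h1, h2⟩ := (hq'.and (Ioo_mem_nhdsGT hdb)).exists
    rw [← h1]; exact (gg_spec h (by linarith [h2.1])).1
  · obtain ⟨η, ⟨h1, h1'⟩, h2⟩ := ((hq'.and hp).and (Ioo_mem_nhdsGT hdb)).exists
    rw [← h1, ← h1']
    exact gg_anti h (by linarith [h2.1, h2.2]) (by linarith [h2.1])
  · -- rectangle with sides `ε`, `η`
    have hmono : ∀ ε η ε' η', 0 < ε → 0 < η → ε ≤ ε' → η ≤ η' → ε' < (d - b) / 2 → η' < (d - b) / 2 →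
        G (b + ε) (d - η) - G (b - ε) (d - η) - G (b + ε) (d + η) + G (b - ε) (d + η) ≤
        G (b + ε') (d - η') - G (b - ε') (d - η') - G (b + ε') (d + η') + G (b - ε') (d + η') := by
      intro ε η ε' η' h1 h2 h3 h4 h5 h6
      have := h.box (b + ε) (b + ε') (d - η') (d + η') (by linarith) (by linarith) (by linarith)
      have := h.box (b - ε') (b - ε) (d - η') (d + η') (by linarith) (by linarith) (by linarith)
      have := h.box (b - ε) (b + ε) (d - η') (d - η) (by linarith) (by linarith) (by linarith)
      have := h.box (b - ε) (b + ε) (d + η) (d + η') (by linarith) (by linarith) (by linarith)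
      linarith
    have hrect : ∀ η, 0 < η → η < (d - b) / 2 → ∀ᶠ ε in 𝓝[>] (0 : ℝ),
        G (b + ε) (d - η) - G (b - ε) (d - η) - G (b + ε) (d + η) + G (b - ε) (d + η) =
          gg G b (d - η) - gg G b (d + η) := by
      intro η h1 h2
      filter_upwards [(gg_spec h (b := b) (y := d - η) (by linarith)).2,
        (gg_spec h (b := b) (y := d + η) (by linarith)).2] with ε e1 e2
      linarith
    apply le_antisymm
    · -- choose η first, then ε small for it
      obtain ⟨η, ⟨h1, h1'⟩, h2⟩ := ((hq'.and hp).and (Ioo_mem_nhdsGT hdb)).exists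
      have h1'' : gg G b (d - η) = p := h1'
      obtain ⟨ε0, e1, e2⟩ := ((hrect η h2.1 h2.2).and (Ioo_mem_nhdsGT hdb)).exists
      obtain ⟨ε, ⟨e3, e4⟩, e5⟩ := (((mm_spec h hbd).2.and (Ioo_mem_nhdsGT e2.1)).and
        (Ioo_mem_nhdsGT h2.1)).exists
      have := hmono ε ε ε0 η e4.1 e4.1 e4.2.le e5.2.le e2.2 h2.2
      rw [e1, e3] at this
      rw [h1, h1''] at this
      exact this
    · obtain ⟨ε0, e1, e2⟩ := ((mm_spec h hbd).2.and (Ioo_mem_nhdsGT hdb)).exists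
      obtain ⟨η, ⟨h1, h1'⟩, h2⟩ := ((hq'.and hp).and (Ioo_mem_nhdsGT e2.1)).exists
      have h1'' : gg G b (d - η) = p := h1'
      obtain ⟨ε, e3, e4⟩ := ((hrect η h2.1 (h2.2.trans e2.2)).and (Ioo_mem_nhdsGT e2.1)).exists
      have := hmono ε η ε0 ε0 e4.1 h2.1 e4.2.le h2.2.le e2.2 e2.2
      rw [e1, e3] at this
      rw [h1, h1''] at this
      exact this

/-- levels at which the `k`-th bar born at `b` is alive -/
def lev (G : ℝ → ℝ → ℤ) (b : ℝ) (k : ℕ) : Set ℝ := {y | b < y ∧ (k : ℤ) < gg G b y}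

/-- bars, listed by birth and rank among those with the same birth -/
def Bar (G : ℝ → ℝ → ℤ) : Type := {z : ℝ × ℕ // (lev G z.1 z.2).Nonempty}

noncomputable def death (G : ℝ → ℝ → ℤ) (z : ℝ × ℕ) : ℝ := sSup (lev G z.1 z.2)

noncomputable def pt (G : ℝ → ℝ → ℤ) (z : Bar G) : ℝ × ℝ := (z.1.1, death G z.1)

lemma lev_bdd {G : ℝ → ℝ → ℤ} (h : RK G) (b : ℝ) (k : ℕ) : BddAbove (lev G b k) := by
  obtain ⟨Y, hY⟩ := gg_zero h
  refine ⟨Y, fun y hy => ?_⟩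
  by_contra hlt
  have := hY b y hy.1 (not_le.1 hlt).le
  have := hy.2
  omega

lemma pt_lt {G : ℝ → ℝ → ℤ} (h : RK G) (z : Bar G) : (pt G z).1 < (pt G z).2 := by
  obtain ⟨y, hy⟩ := z.2
  exact hy.1.trans_le (le_csSup (lev_bdd h _ _) hy)

lemma fiber_set {G : ℝ → ℝ → ℤ} (h : RK G) {b d : ℝ} (hbd : b < d) :
    ∃ p q : ℕ, q ≤ p ∧ mm G b d = (p : ℤ) - q ∧
      ∀ k, ((lev G b k).Nonempty ∧ death G (b, k) = d) ↔ q ≤ k ∧ k < p := by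
  obtain ⟨p, q, hq0, hqp, hm, hp, hq⟩ := mm_eq h hbd
  refine ⟨p.toNat, q.toNat, by omega, by omega, fun k => ?_⟩
  have hdb : (0 : ℝ) < d - b := by linarith
  constructor
  · rintro ⟨hne, hd⟩
    have hd : sSup (lev G b k) = d := hd
    constructor
    · obtain ⟨η, h1, h2⟩ := (hq.and (Ioo_mem_nhdsGT hdb)).exists
      by_contra hlt
      have : d + η ∈ lev G b k := ⟨by linarith [h2.1], by omega⟩
      have := le_csSup (lev_bdd h _ _) this
      linarith [h2.1]
    · obtain ⟨η, h1, h2⟩ := (hp.and (Ioo_mem_nhdsGT hdb)).exists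
      obtain ⟨s, hs, hs'⟩ := exists_lt_of_lt_csSup hne (show d - η < sSup (lev G b k) by
        rw [hd]; linarith [h2.1])
      have := gg_anti h (b := b) (y := d - η) (y' := s) (by linarith [h2.2]) hs'.le
      have := hs.2
      omega
  · rintro ⟨h1, h2⟩
    have hmem : ∀ᶠ η in 𝓝[>] (0 : ℝ), d - η ∈ lev G b k := by
      filter_upwards [hp, Ioo_mem_nhdsGT hdb] with η e1 e2
      exact ⟨by linarith [e2.2], by omega⟩
    have hne : (lev G b k).Nonempty := let ⟨η, hη⟩ := hmem.exists; ⟨_, hη⟩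
    refine ⟨hne, le_antisymm ?_ ?_⟩
    · refine csSup_le hne fun y hy => ?_
      by_contra hlt
      obtain ⟨η, e1, e2⟩ := (hq.and (Ioo_mem_nhdsGT (show 0 < y - d by linarith))).exists
      have := gg_anti h (b := b) (y := d + η) (y' := y) (by linarith [e2.1]) (by linarith [e2.2])
      have h5 : (k : ℤ) < gg G b y := hy.2
      omega
    · by_contra hlt
      obtain ⟨η, e1, e2⟩ := (hmem.and (Ioo_mem_nhdsGT (sub_pos.2 (not_le.1 hlt)))).exists
      have := le_csSup (lev_bdd h _ _) e1
      have h3 := e2.2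
      unfold death at h3
      simp only at h3
      linarith

/-- multiplicity, zero below the diagonal -/
noncomputable def mu (G : ℝ → ℝ → ℤ) (p : ℝ × ℝ) : ℕ := if p.1 < p.2 then (mm G p.1 p.2).toNat else 0

lemma fiber_equiv {G : ℝ → ℝ → ℤ} (h : RK G) (p : ℝ × ℝ) :
    Nonempty ({z : Bar G // pt G z = p} ≃ Fin (mu G p)) := by
  obtain ⟨b, d⟩ := p
  by_cases hbd : b < d
  · obtain ⟨p, q, hqp, hm, hk⟩ := fiber_set h hbd
    have hmu : mu G (b, d) = p - q := by simp only [mu, hbd, if_true]; omega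
    have e : {z : Bar G // pt G z = (b, d)} ≃ Finset.Ico q p :=
      { toFun := fun z => ⟨z.1.1.2, by
          obtain ⟨⟨⟨b', k⟩, hz⟩, hz'⟩ := z
          simp only [pt, Prod.mk.injEq] at hz'
          obtain ⟨rfl, h2⟩ := hz'
          rw [Finset.mem_Ico]
          exact (hk k).1 ⟨hz, h2⟩⟩
        invFun := fun k => ⟨⟨(b, k.1), ((hk k.1).2 (Finset.mem_Ico.1 k.2)).1⟩, by
          simp only [pt, Prod.mk.injEq, true_and]
          exact ((hk k.1).2 (Finset.mem_Ico.1 k.2)).2⟩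
        left_inv := by
          rintro ⟨⟨⟨b', k⟩, hz⟩, hz'⟩
          simp only [pt, Prod.mk.injEq] at hz'
          obtain ⟨rfl, h2⟩ := hz'
          rfl
        right_inv := fun k => rfl }
    rw [hmu]
    exact ⟨e.trans (Finset.equivFinOfCardEq (by simp))⟩
  · have hmu : mu G (b, d) = 0 := by simp [mu, hbd]
    rw [hmu]
    have : IsEmpty {z : Bar G // pt G z = (b, d)} := ⟨fun z => hbd (by
      have := pt_lt h z.1
      rw [z.2] at this; exact this)⟩
    exact ⟨Equiv.equivOfIsEmpty _ _⟩

lemma bar_countable {G : ℝ → ℝ → ℤ} (h : RK G) : Countable (Bar G) := by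
  have h1 : ∀ q : ℚ, {b : ℝ | b ∈ Set.Iio (q : ℝ) ∧
      ¬ ContinuousWithinAt (fun x => G x q) (Set.Iio (q : ℝ)) b}.Countable := fun q =>
    MonotoneOn.countable_not_continuousWithinAt (fun x _ x' hx' hxx => h.mono hxx hx')
  have h2 : {b : ℝ | ∃ k, (lev G b k).Nonempty}.Countable := by
    refine (Set.countable_iUnion h1).mono ?_
    rintro b ⟨k, y, hy1, hy2⟩
    obtain ⟨q, hq1, hq2⟩ := exists_rat_btwn hy1
    refine Set.mem_iUnion.2 ⟨q, hq1, fun hc => ?_⟩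
    have hpos : 0 < gg G b q := by
      have := gg_anti h hq1 hq2.le
      omega
    have hc' : ContinuousAt (fun x => G x q) b := hc.continuousAt (Iio_mem_nhds hq1)
    have hev : ∀ᶠ x in 𝓝 b, G x q = G b q := by
      have := hc'.preimage_mem_nhds (t := {G b q}) (by rw [nhds_discrete]; exact Filter.mem_pure.2 rfl)
      filter_upwards [this] with x hx
      exact hx
    have t1 : Filter.Tendsto (fun ε : ℝ => b + ε) (𝓝[>] 0) (𝓝 b) := by
      have : Filter.Tendsto (fun ε : ℝ => b + ε) (𝓝 0) (𝓝 (b + 0)) :=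
        (continuous_const.add continuous_id).tendsto 0
      rw [add_zero] at this
      exact this.mono_left nhdsWithin_le_nhds
    have t2 : Filter.Tendsto (fun ε : ℝ => b - ε) (𝓝[>] 0) (𝓝 b) := by
      have : Filter.Tendsto (fun ε : ℝ => b - ε) (𝓝 0) (𝓝 (b - 0)) :=
        (continuous_const.sub continuous_id).tendsto 0
      rw [sub_zero] at this
      exact this.mono_left nhdsWithin_le_nhds
    obtain ⟨ε, ⟨e1, e2⟩, e3⟩ := (((t1.eventually hev).and (t2.eventually hev)).and
      (gg_spec h hq1).2).exists
    omega
  have h3 : {z : ℝ × ℕ | (lev G z.1 z.2).Nonempty}.Countable := by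
    refine (h2.prod (Set.countable_univ (α := ℕ))).mono ?_
    intro z hz
    exact Set.mem_prod.2 ⟨⟨z.2, hz⟩, trivial⟩
  exact h3.to_subtype

/-- comparison of bars with the same birth -/
lemma compare {G1 G2 : ℝ → ℝ → ℤ} (h1 : RK G1) (h2 : RK G2) {c : ℝ}
    (hle : ∀ b ε y, 0 < ε → b + ε < y → G1 (b + ε) y - G1 (b - ε) y ≤ G2 (b + ε) y - G2 (b - ε) y)
    (hge : ∀ b ε y, 0 < ε → b + ε < y - c →
      G2 (b + ε) y - G2 (b - ε) y ≤ G1 (b + ε) (y - c) - G1 (b - ε) (y - c)) (hc : 0 ≤ c) :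
    (∀ z : ℝ × ℕ, (lev G1 z.1 z.2).Nonempty → (lev G2 z.1 z.2).Nonempty ∧ 
      death G1 z ≤ death G2 z ∧ death G2 z ≤ death G1 z + c) ∧
    (∀ z : ℝ × ℕ, (lev G2 z.1 z.2).Nonempty → ¬ (lev G1 z.1 z.2).Nonempty →
      death G2 z ≤ z.1 + c) := by
  have g1 : ∀ b y, b < y → gg G1 b y ≤ gg G2 b y := by
    intro b y hb
    obtain ⟨ε, ⟨e1, e2⟩, e3⟩ := (((gg_spec h1 hb).2.and (gg_spec h2 hb).2).and
      (Ioo_mem_nhdsGT (show (0 : ℝ) < y - b by linarith))).exists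
    rw [← e1, ← e2]; exact hle _ _ _ e3.1 (by linarith [e3.2])
  have g2 : ∀ b y, b < y - c → gg G2 b y ≤ gg G1 b (y - c) := by
    intro b y hb
    obtain ⟨ε, ⟨e1, e2⟩, e3⟩ := (((gg_spec h1 hb).2.and
      (gg_spec h2 (show b < y by linarith)).2).and
      (Ioo_mem_nhdsGT (show (0 : ℝ) < y - c - b by linarith))).exists
    rw [← e1, ← e2]; exact hge _ _ _ e3.1 (by linarith [e3.2])
  have s1 : ∀ b k, lev G1 b k ⊆ lev G2 b k := fun b k y hy => ⟨hy.1, hy.2.trans_le (g1 _ _ hy.1)⟩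
  have s2 : ∀ b k y, y ∈ lev G2 b k → b + c < y → y - c ∈ lev G1 b k := fun b k y hy hb =>
    ⟨by linarith, hy.2.trans_le (g2 _ _ (by linarith))⟩
  refine ⟨fun z hz => ⟨hz.mono (s1 _ _), csSup_le_csSup (lev_bdd h2 _ _) hz (s1 _ _), ?_⟩,
    fun z hz hz' => ?_⟩
  · refine csSup_le (hz.mono (s1 _ _)) fun y hy => ?_
    by_cases hb : z.1 + c < y
    · have := le_csSup (lev_bdd h1 _ _) (s2 _ _ _ hy hb)
      unfold death; linarith
    · obtain ⟨w, hw⟩ := hz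
      have := le_csSup (lev_bdd h1 _ _) hw
      have := hw.1
      unfold death; linarith
  · refine csSup_le hz fun y hy => ?_
    by_contra hb
    exact hz' ⟨_, s2 _ _ _ hy (not_le.1 hb)⟩

lemma equiv_over {X Y T : Type} (f : X → T) (g : Y → T) (n : T → ℕ)
    (hf : ∀ t, Nonempty ({x // f x = t} ≃ Fin (n t)))
    (hg : ∀ t, Nonempty ({y // g y = t} ≃ Fin (n t))) : ∃ e : X ≃ Y, ∀ x, g (e x) = f x := by
  have ef := fun t => (hf t).some
  have eg := fun t => (hg t).some
  let E : X ≃ Y := (Equiv.sigmaFiberEquiv f).symm.trans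
    ((Equiv.sigmaCongrRight fun t => (ef t).trans (eg t).symm).trans (Equiv.sigmaFiberEquiv g))
  exact ⟨E, fun x => ((eg (f x)).symm (ef (f x) ⟨x, rfl⟩)).2⟩

/-! ### The matching -/

lemma mu_refl (G : ℝ → ℝ → ℤ) (b d : ℝ) :
    mu (fun x y => G (-y) (-x)) (-d, -b) = mu G (b, d) := by
  have hmm : mm (fun x y => G (-y) (-x)) (-d) (-b) = mm G b d := by
    unfold mm
    congr 1
    ext z
    have e1 : ∀ ε : ℝ, -(-b - ε) = b + ε := fun ε => by ring
    have e2 : ∀ ε : ℝ, -(-b + ε) = b - ε := fun ε => by ring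
    have e3 : ∀ ε : ℝ, -(-d - ε) = d + ε := fun ε => by ring
    have e4 : ∀ ε : ℝ, -(-d + ε) = d - ε := fun ε => by ring
    have e5 : (-b - -d) / 2 = (d - b) / 2 := by ring
    simp only [Set.mem_ofPred_eq, e1, e2, e3, e4, e5]
    refine exists_congr fun ε => and_congr_right fun _ => and_congr_right fun _ => ?_
    constructor <;> intro h <;> rw [h] <;> ring
  unfold mu
  simp only [hmm, neg_lt_neg_iff]

/-- point of a bar listed by death -/
noncomputable def ptr (G : ℝ → ℝ → ℤ) (z : Bar (fun x y => G (-y) (-x))) : ℝ × ℝ :=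
  (-(pt (fun x y => G (-y) (-x)) z).2, -(pt (fun x y => G (-y) (-x)) z).1)

lemma fiber_equiv_refl {G : ℝ → ℝ → ℤ} (h : RK G) (p : ℝ × ℝ) :
    Nonempty ({z // ptr G z = p} ≃ Fin (mu G p)) := by
  obtain ⟨b, d⟩ := p
  obtain ⟨e⟩ := fiber_equiv h.refl' (-d, -b)
  rw [mu_refl] at e
  refine ⟨(Equiv.subtypeEquivRight fun z => ?_).trans e⟩
  unfold ptr
  rw [Prod.ext_iff, Prod.ext_iff]
  simp only
  constructor
  · rintro ⟨h1, h2⟩; constructor <;> linarith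
  · rintro ⟨h1, h2⟩; constructor <;> linarith

lemma bars_match {Gp GI Gq : ℝ → ℝ → ℤ} (hp : RK Gp) (hI : RK GI) (hq : RK Gq) {c : ℝ} (hc : 0 ≤ c)
    (h1 : ∀ x x' y, x ≤ x' → x' < y → GI x' y - GI x y ≤ Gp x' y - Gp x y)
    (h2 : ∀ x x' y, x ≤ x' → x' < y - c → Gp x' y - Gp x y ≤ GI x' (y - c) - GI x (y - c))
    (h3 : ∀ x y y', x < y → y ≤ y' → GI x y - GI x y' ≤ Gq x y - Gq x y')
    (h4 : ∀ x y y', x + c < y → y ≤ y' → Gq x y - Gq x y' ≤ GI (x + c) y - GI (x + c) y') :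
    ∃ (P Q I : Type) (ptP : P → ℝ × ℝ) (ptQ : Q → ℝ × ℝ) (f : I → P) (g : I → Q),
      Countable P ∧ Countable Q ∧ 
      (∀ p, Nonempty ({z // ptP z = p} ≃ Fin (mu Gp p))) ∧
      (∀ p, Nonempty ({z // ptQ z = p} ≃ Fin (mu Gq p))) ∧
      Function.Injective f ∧ Function.Injective g ∧
      (∀ i, (ptQ (g i)).1 ≤ (ptP (f i)).1 ∧ (ptP (f i)).1 ≤ (ptQ (g i)).1 + c ∧
        (ptQ (g i)).2 ≤ (ptP (f i)).2 ∧ (ptP (f i)).2 ≤ (ptQ (g i)).2 + c) ∧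
      (∀ p, p ∉ Set.range f → (ptP p).2 - (ptP p).1 ≤ c) ∧
      (∀ q, q ∉ Set.range g → (ptQ q).2 - (ptQ q).1 ≤ c) := by
  obtain ⟨A1, A2⟩ := compare hI hp (c := c)
    (fun b ε y e1 e2 => h1 _ _ _ (by linarith) e2)
    (fun b ε y e1 e2 => h2 _ _ _ (by linarith) e2) hc
  obtain ⟨B1, B2⟩ := compare hI.refl' hq.refl' (c := c)
    (fun b ε y e1 e2 => h3 _ _ _ (by linarith) (by linarith))
    (fun b ε y e1 e2 => by
      have := h4 (-y) (-(b + ε)) (-(b - ε)) (by linarith) (by linarith)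
      rw [show -(y - c) = -y + c by ring]
      exact this) hc
  obtain ⟨e, he⟩ := equiv_over (pt GI) (ptr GI) (mu GI) (fiber_equiv hI) (fiber_equiv_refl hI)
  let f : Bar GI → Bar Gp := fun i => ⟨i.1, (A1 i.1 i.2).1⟩
  let g : Bar GI → Bar (fun x y => Gq (-y) (-x)) := fun i => ⟨(e i).1, (B1 (e i).1 (e i).2).1⟩
  refine ⟨Bar Gp, _, Bar GI, pt Gp, ptr Gq, f, g, bar_countable hp, bar_countable hq.refl',
    fiber_equiv hp, fiber_equiv_refl hq, ?_, ?_, ?_, ?_, ?_⟩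
  · intro i j hij
    exact Subtype.ext (congrArg (fun z : Bar Gp => z.1) hij)
  · intro i j hij
    exact e.injective (Subtype.ext
      (congrArg (fun z : Bar (fun x y => Gq (-y) (-x)) => z.1) hij))
  · intro i
    have a1 := (A1 i.1 i.2).2
    have b1 := (B1 (e i).1 (e i).2).2
    have hi := Prod.ext_iff.1 (he i)
    simp only [ptr, pt] at hi
    simp only [ptr, pt, f, g]
    obtain ⟨u1, u2⟩ := hi
    obtain ⟨a1, a2⟩ := a1
    obtain ⟨b1, b2⟩ := b1
    refine ⟨?_, ?_, ?_, ?_⟩ <;> linarith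
  · intro p hp'
    have := A2 p.1 p.2 (fun h => hp' ⟨⟨p.1, h⟩, rfl⟩)
    simp only [pt]; linarith
  · intro q hq'
    have := B2 q.1 q.2 (fun h => hq' ⟨e.symm ⟨q.1, h⟩, by
      apply Subtype.ext
      exact congrArg (fun z : Bar (fun x y => GI (-y) (-x)) => z.1) (e.apply_symm_apply ⟨q.1, h⟩)⟩)
    simp only [ptr, pt]; linarith

/-! ### Size pairs give rank functions -/

noncomputable def GR {M : Type*} [TopologicalSpace M] (α β : M → ℝ) (x y : ℝ) : ℤ :=
  (ncomp {Q | α Q ≤ x} {Q | β Q ≤ y} : ℤ) - ncomp {Q | α Q ≤ x} Set.univ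

section
variable {M : Type*} [TopologicalSpace M] [CompactSpace M] [LocallyConnectedSpace M]

lemma sub_fin {α β : M → ℝ} (hα : Continuous α) (hβ : Continuous β) (hle : ∀ Q, β Q ≤ α Q) {x y : ℝ}
    (hxy : x < y) : (connectedComponentIn {Q | β Q ≤ y} '' {Q | α Q ≤ x}).Finite := by
  refine comp_finite (isClosed_le hα continuous_const).isCompact ?_
  have h1 : {Q | β Q < y} ⊆ interior {Q | β Q ≤ y} :=
    interior_maximal (fun Q (hQ : β Q < y) => (show β Q ≤ y from hQ.le)) (isOpen_lt hβ continuous_const)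
  intro Q hQ
  exact h1 (((hle Q).trans hQ).trans_lt hxy)

lemma GR_RK [Nonempty M] {α β : M → ℝ} (hα : Continuous α) (hβ : Continuous β)
    (hle : ∀ Q, β Q ≤ α Q) : RK (GR α β) := by
  refine ⟨?_, ?_, ?_⟩
  · intro x x' y y' h1 h2 h3
    have := ncomp_box (A := {Q | α Q ≤ x}) (A' := {Q | α Q ≤ x'}) (B := {Q | β Q ≤ y})
      (B' := {Q | β Q ≤ y'}) (fun Q hQ => le_trans hQ h1)
      (fun Q hQ => ((hle Q).trans hQ).trans h2.le) (fun Q hQ => le_trans hQ h3)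
      (sub_fin hα hβ hle h2)
    unfold GR
    linarith
  · obtain ⟨Q0, -, hQ0'⟩ := isCompact_univ.exists_isMaxOn Set.univ_nonempty hβ.continuousOn
    have hQ0 : ∀ Q, β Q ≤ β Q0 := fun Q => hQ0' (Set.mem_univ Q)
    refine ⟨β Q0, fun x y _ hy => ?_⟩
    have : {Q | β Q ≤ y} = Set.univ := by
      ext Q; simpa using (hQ0 Q).trans hy
    unfold GR
    rw [this]; ring
  · obtain ⟨Q0, -, hQ0'⟩ := isCompact_univ.exists_isMinOn Set.univ_nonempty hα.continuousOn
    have hQ0 : ∀ Q, α Q0 ≤ α Q := fun Q => hQ0' (Set.mem_univ Q)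
    refine ⟨α Q0 - 1, fun x y _ hx => ?_⟩
    have : {Q | α Q ≤ x} = ∅ := by
      ext Q; simpa using (by linarith [hQ0 Q] : x < α Q)
    unfold GR
    rw [this]; simp [ncomp]

lemma mult_eq_mm (φ : M → ℝ) (b d : ℝ) : mult φ (b, d) = mm (GR φ φ) b d := by
  unfold mult mm
  congr 1
  ext z
  simp only [Set.mem_ofPred_eq, rsf_eq_ncomp, GR]
  refine exists_congr fun ε => and_congr_right fun _ => ?_
  refine and_congr ⟨fun h => by linarith, fun h => by linarith⟩ ?_
  constructor <;> intro h <;> rw [h] <;> ring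

lemma size_match [Nonempty M] {φ ψ : M → ℝ} (hφ : Continuous φ) (hψ : Continuous ψ) {c : ℝ} (hc : 0 ≤ c)
    (h1 : ∀ Q, ψ Q ≤ φ Q) (h2 : ∀ Q, φ Q ≤ ψ Q + c) :
    ∃ (P Q I : Type) (ptP : P → ℝ × ℝ) (ptQ : Q → ℝ × ℝ) (f : I → P) (g : I → Q),
      Countable P ∧ Countable Q ∧ 
      (∀ p, Nonempty ({z // ptP z = p} ≃ Fin (mu (GR φ φ) p))) ∧
      (∀ p, Nonempty ({z // ptQ z = p} ≃ Fin (mu (GR ψ ψ) p))) ∧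
      Function.Injective f ∧ Function.Injective g ∧
      (∀ i, (ptQ (g i)).1 ≤ (ptP (f i)).1 ∧ (ptP (f i)).1 ≤ (ptQ (g i)).1 + c ∧
        (ptQ (g i)).2 ≤ (ptP (f i)).2 ∧ (ptP (f i)).2 ≤ (ptQ (g i)).2 + c) ∧
      (∀ p, p ∉ Set.range f → (ptP p).2 - (ptP p).1 ≤ c) ∧
      (∀ q, q ∉ Set.range g → (ptQ q).2 - (ptQ q).1 ≤ c) := by
  have rp := GR_RK hφ hφ (fun Q => le_rfl)
  have rI := GR_RK hφ hψ h1
  have rq := GR_RK hψ hψ (fun Q => le_rfl)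
  refine bars_match rp rI rq hc ?_ ?_ ?_ ?_
  · intro x x' y e1 e2
    have := ncomp_box (A := {Q | φ Q ≤ x}) (A' := {Q | φ Q ≤ x'}) (B := {Q | φ Q ≤ y})
      (B' := {Q | ψ Q ≤ y}) (fun Q hQ => le_trans hQ e1)
      (fun Q hQ => le_trans hQ e2.le) (fun Q hQ => le_trans (h1 Q) hQ)
      (sub_fin hφ hφ (fun Q => le_rfl) e2)
    unfold GR
    linarith
  · intro x x' y e1 e2
    have := ncomp_box (A := {Q | φ Q ≤ x}) (A' := {Q | φ Q ≤ x'}) (B := {Q | ψ Q ≤ y - c})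
      (B' := {Q | φ Q ≤ y}) (fun Q hQ => le_trans hQ e1)
      (fun Q hQ => le_trans (h1 Q) (le_trans hQ e2.le))
      (fun Q hQ => by
        have hQ : ψ Q ≤ y - c := hQ
        show φ Q ≤ y
        linarith [h2 Q])
      (sub_fin hφ hψ h1 e2)
    unfold GR
    linarith
  · intro x y y' e1 e2
    have := ncomp_box (A := {Q | φ Q ≤ x}) (A' := {Q | ψ Q ≤ x}) (B := {Q | ψ Q ≤ y})
      (B' := {Q | ψ Q ≤ y'}) (fun Q hQ => le_trans (h1 Q) hQ)
      (fun Q hQ => le_trans hQ e1.le) (fun Q hQ => le_trans hQ e2)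
      (sub_fin hψ hψ (fun Q => le_rfl) e1)
    unfold GR
    linarith
  · intro x y y' e1 e2
    have := ncomp_box (A := {Q | ψ Q ≤ x}) (A' := {Q | φ Q ≤ x + c}) (B := {Q | ψ Q ≤ y})
      (B' := {Q | ψ Q ≤ y'})
      (fun Q hQ => by
        have hQ : ψ Q ≤ x := hQ
        show φ Q ≤ x + c
        linarith [h2 Q])
      (fun Q hQ => le_trans (h1 Q) (le_trans hQ e1.le)) (fun Q hQ => le_trans hQ e2)
      (sub_fin hφ hψ h1 e1)
    unfold GR
    linarith

end

/-! ### Transport of the size functions -/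

lemma rsf_homeo {M N : Type*} [TopologicalSpace M] [TopologicalSpace N] (h : M ≃ₜ N) (ψ : N → ℝ)
    {x y : ℝ} (hxy : x ≤ y) : rsf (fun Q => ψ (h Q)) x y = rsf ψ x y := by
  have hs : h '' {Q | ψ (h Q) ≤ y} = {Q | ψ Q ≤ y} := by
    ext Q
    constructor
    · rintro ⟨P, hP, rfl⟩; exact hP
    · intro hQ
      exact ⟨h.symm Q, by simpa using hQ, by simp⟩
  rw [rsf_eq_ncomp, rsf_eq_ncomp]
  unfold ncomp
  rw [← Set.ncard_image_of_injective _ (Set.image_injective.2 h.injective)]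
  congr 1
  ext C
  constructor
  · rintro ⟨_, ⟨P, hP, rfl⟩, rfl⟩
    refine ⟨h P, hP, ?_⟩
    rw [h.image_connectedComponentIn (show P ∈ {Q | ψ (h Q) ≤ y} from le_trans hP hxy), hs]
  · rintro ⟨P, hP, rfl⟩
    have hP : ψ P ≤ x := hP
    refine ⟨_, ⟨h.symm P, by simpa using hP, rfl⟩, ?_⟩
    rw [h.image_connectedComponentIn (show h.symm P ∈ {Q | ψ (h Q) ≤ y} by
      simpa using le_trans hP hxy), hs, h.apply_symm_apply]

lemma mult_transport {M N : Type*} [TopologicalSpace M] [TopologicalSpace N] (h : M ≃ₜ N) (ψ : N → ℝ)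
    (δ b d : ℝ) : mult (fun Q => ψ (h Q) - δ) (b, d) = mult ψ (b + δ, d + δ) := by
  have hr : ∀ x y : ℝ, x ≤ y → rsf (fun Q => ψ (h Q) - δ) x y = rsf ψ (x + δ) (y + δ) := by
    intro x y hxy
    rw [← rsf_homeo h ψ (show x + δ ≤ y + δ by linarith)]
    unfold rsf
    simp only [sub_le_iff_le_add]
  unfold mult
  congr 1
  ext z
  simp only [Set.mem_ofPred_eq]
  refine exists_congr fun ε => and_congr_right fun h0 => ?_
  have e1 : b + ε + δ = b + δ + ε := by ring
  have e2 : b - ε + δ = b + δ - ε := by ring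
  have e3 : d + ε + δ = d + δ + ε := by ring
  have e4 : d - ε + δ = d + δ - ε := by ring
  have e5 : b + ε < d - ε ↔ b + δ + ε < d + δ - ε :=
    ⟨fun h => by linarith, fun h => by linarith⟩
  rw [← e5]
  refine and_congr_right fun h1 => ?_
  rw [hr _ _ h1.le, hr _ _ (by linarith), hr _ _ (by linarith), hr _ _ (by linarith), e1, e2, e3, e4]

lemma multInf_pos {M : Type*} [TopologicalSpace M] [CompactSpace M] [LocallyConnectedSpace M]
    {φ : M → ℝ} (hφ : Continuous φ) {P : M} (hP : ∀ Q, φ P ≤ φ Q) : 0 < multInf φ (φ P) := by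
  set k := φ P with hk
  have hlb : ∀ z ∈ {z : ℤ | ∃ ε : ℝ, 0 < ε ∧ k + ε < 1 / ε ∧
    z = (rsf φ (k + ε) (1 / ε) : ℤ) - (rsf φ (k - ε) (1 / ε) : ℤ)}, 1 ≤ z := by
    rintro z ⟨ε, h1, h2, rfl⟩
    have r0 : rsf φ (k - ε) (1 / ε) = 0 := by
      rw [rsf_eq_ncomp]
      have : {Q | φ Q ≤ k - ε} = ∅ := by
        ext Q; simpa using (by linarith [hP Q] : k - ε < φ Q)
      rw [this]; simp [ncomp]
    have r1 : 0 < rsf φ (k + ε) (1 / ε) := by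
      rw [rsf_eq_ncomp]
      unfold ncomp
      rw [Set.ncard_pos (sub_fin hφ hφ (fun Q => le_rfl) h2)]
      exact ⟨_, P, (by show φ P ≤ k + ε; linarith), rfl⟩
    omega
  unfold multInf
  have hne : {z : ℤ | ∃ ε : ℝ, 0 < ε ∧ k + ε < 1 / ε ∧
    z = (rsf φ (k + ε) (1 / ε) : ℤ) - (rsf φ (k - ε) (1 / ε) : ℤ)}.Nonempty := by
    refine ⟨_, 1 / (|k| + 2), by positivity, ?_, rfl⟩
    have : (0 : ℝ) < |k| + 2 := by positivity
    rw [one_div_one_div]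
    have h1 : 1 / (|k| + 2) ≤ 1 := by
      rw [div_le_one this]; linarith [abs_nonneg k]
    linarith [le_abs_self k]
  have := le_csInf hne hlb
  omega

/-! ### Representative sequences -/

/-- entries of a representative sequence -/
noncomputable def ent {P W : Type} (k : ℝ) (pt : P → ℝ × ℝ) : Option (P ⊕ W) → ℝ × EReal
  | none => (k, ⊤)
  | some (Sum.inl p) => ((pt p).1, ((pt p).2 : EReal))
  | some (Sum.inr _) => (0, ((0 : ℝ) : EReal))

lemma isRepSeq_of {M : Type*} [TopologicalSpace M] {φ : M → ℝ} {P W : Type} [Infinite W] {k : ℝ}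
    (hk : 0 < multInf φ k) (pt : P → ℝ × ℝ)
    (hpt : ∀ p : ℝ × ℝ, Nonempty ({z // pt z = p} ≃ Fin (if p.1 < p.2 then (mult φ p).toNat else 0)))
    (e : ℕ ≃ Option (P ⊕ W)) (he : e 0 = none) :
    IsRepSeq φ (fun i => ent k pt (e i)) := by
  refine ⟨⟨k, by simp only [he, ent], hk⟩, ?_, ?_, ?_⟩
  · intro i hi
    have hne : e i ≠ none := fun h => by
      rw [← he] at h; have := e.injective h; omega
    rcases h : e i with _ | (p | w)
    · exact absurd h hne
    · left
      obtain ⟨e'⟩ := hpt (pt p)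
      have hpos := (e' ⟨p, rfl⟩).pos
      split_ifs at hpos with hlt
      · exact ⟨(pt p).1, (pt p).2, by simp only [h, ent], hlt, by simpa using hpos⟩
      · omega
    · right; exact ⟨0, by simp only [h, ent]⟩
  · intro x y hxy _
    obtain ⟨e'⟩ := hpt (x, y)
    rw [if_pos hxy] at e'
    have hset : {i : ℕ | ent k pt (e i) = (x, (y : EReal))} =
        (fun p : P => e.symm (some (Sum.inl p))) '' {p | pt p = (x, y)} := by
      ext i
      constructor
      · intro hi
        have hi : ent k pt (e i) = (x, (y : EReal)) := hi
        rcases h : e i with _ | (p | w)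
        · rw [h] at hi; simp [ent] at hi
        · rw [h] at hi
          simp only [ent, Prod.mk.injEq, EReal.coe_eq_coe_iff] at hi
          refine ⟨p, Prod.ext hi.1 hi.2, ?_⟩
          simp only [← h, Equiv.symm_apply_apply]
        · rw [h] at hi
          simp only [ent, Prod.mk.injEq, EReal.coe_eq_coe_iff] at hi
          linarith [hi.1, hi.2]
      · rintro ⟨p, hp, rfl⟩
        have hp : pt p = (x, y) := hp
        show ent k pt (e (e.symm (some (Sum.inl p)))) = _
        rw [Equiv.apply_symm_apply]
        simp only [ent, hp]
    rw [hset, Set.ncard_image_of_injective]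
    · have := Nat.card_congr e'
      rw [Nat.card_fin] at this
      exact this
    · intro p q hpq
      simpa using hpq
  · have : (Set.range fun w : W => e.symm (some (Sum.inr w))).Infinite := by
      apply Set.infinite_range_of_injective
      intro w w' h
      simpa using h
    refine this.mono ?_
    rintro _ ⟨w, rfl⟩
    refine ⟨0, ?_⟩
    show ent k pt (e (e.symm (some (Sum.inr w)))) = _
    rw [Equiv.apply_symm_apply]
    rfl

lemma exists_enum (J : Type) [Countable J] [Infinite J] : ∃ e : ℕ ≃ Option J, e 0 = none := by
  obtain ⟨e⟩ := (nonempty_equiv_of_countable : Nonempty (ℕ ≃ Option J))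
  exact ⟨(Equiv.swap 0 (e.symm none)).trans e, by simp⟩

lemma eDist_coe (a b c d : ℝ) : eDist (a, (b : EReal)) (c, (d : EReal)) =
    ENNReal.ofReal (min (max |a - c| |b - d|) (max ((b - a) / 2) ((d - c) / 2))) := by
  simp [eDist]

lemma exists_tau {P Q I : Type} {f : I → P} {g : I → Q} (hf : Function.Injective f)
    (hg : Function.Injective g) :
    ∃ τ : P ⊕ ({q // q ∉ Set.range g} ⊕ ℕ) ≃ Q ⊕ ({p // p ∉ Set.range f} ⊕ ℕ),
      (∀ i, τ (Sum.inl (f i)) = Sum.inl (g i)) ∧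
      (∀ p, p ∉ Set.range f → ∃ w, τ (Sum.inl p) = Sum.inr w) ∧
      (∀ q, τ (Sum.inr (Sum.inl q)) = Sum.inl q.1) ∧
      (∀ n, τ (Sum.inr (Sum.inr n)) = Sum.inr (Sum.inr n)) := by
  classical
  let F : P ⊕ ({q // q ∉ Set.range g} ⊕ ℕ) → Q ⊕ ({p // p ∉ Set.range f} ⊕ ℕ) := fun z =>
    match z with
    | Sum.inl p => if h : p ∈ Set.range f then Sum.inl (g h.choose) else Sum.inr (Sum.inl ⟨p, h⟩)
    | Sum.inr (Sum.inl q) => Sum.inl q.1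
    | Sum.inr (Sum.inr n) => Sum.inr (Sum.inr n)
  have F1 : ∀ i, F (Sum.inl (f i)) = Sum.inl (g i) := by
    intro i
    have h : f i ∈ Set.range f := ⟨i, rfl⟩
    show (if h : f i ∈ Set.range f then _ else _) = _
    rw [dif_pos h, hf h.choose_spec]
  have F2 : ∀ p (h : p ∉ Set.range f), F (Sum.inl p) = Sum.inr (Sum.inl ⟨p, h⟩) := by
    intro p h
    show (if h : p ∈ Set.range f then _ else _) = _
    rw [dif_neg h]
  have F3 : ∀ q, F (Sum.inr (Sum.inl q)) = Sum.inl q.1 := fun _ => rfl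
  have F4 : ∀ n, F (Sum.inr (Sum.inr n)) = Sum.inr (Sum.inr n) := fun _ => rfl
  have hinj : Function.Injective F := by
    have hl : ∀ p, (∃ i, p = f i) ∨ p ∉ Set.range f := fun p => by
      by_cases h : p ∈ Set.range f
      · obtain ⟨i, rfl⟩ := h; exact Or.inl ⟨i, rfl⟩
      · exact Or.inr h
    rintro (p | q | n) (p' | q' | n') h
    · rcases hl p with ⟨i, rfl⟩ | hp <;> rcases hl p' with ⟨i', rfl⟩ | hp'
      · rw [F1, F1] at h
        rw [hg (Sum.inl.inj h)]
      · rw [F1, F2 _ hp'] at h; cases h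
      · rw [F1, F2 _ hp] at h; cases h
      · rw [F2 _ hp, F2 _ hp'] at h
        simpa using h
    · rcases hl p with ⟨i, rfl⟩ | hp
      · rw [F1, F3] at h
        exact absurd ⟨i, Sum.inl.inj h⟩ q'.2
      · rw [F2 _ hp, F3] at h; cases h
    · rcases hl p with ⟨i, rfl⟩ | hp
      · rw [F1, F4] at h; cases h
      · rw [F2 _ hp, F4] at h; simp at h
    · rcases hl p' with ⟨i, rfl⟩ | hp
      · rw [F1, F3] at h
        exact absurd ⟨i, (Sum.inl.inj h).symm⟩ q.2
      · rw [F2 _ hp, F3] at h; cases h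
    · rw [F3, F3] at h
      rw [Subtype.ext (Sum.inl.inj h)]
    · rw [F3, F4] at h; cases h
    · rcases hl p' with ⟨i, rfl⟩ | hp
      · rw [F1, F4] at h; cases h
      · rw [F2 _ hp, F4] at h; simp at h
    · rw [F3, F4] at h; cases h
    · rw [F4, F4] at h
      rw [Sum.inr.inj (Sum.inr.inj h)]
  have hsurj : Function.Surjective F := by
    rintro (q | p | n)
    · by_cases h : q ∈ Set.range g
      · obtain ⟨i, rfl⟩ := h; exact ⟨Sum.inl (f i), F1 i⟩
      · exact ⟨Sum.inr (Sum.inl ⟨q, h⟩), F3 ⟨q, h⟩⟩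
    · exact ⟨Sum.inl p.1, F2 p.1 p.2⟩
    · exact ⟨Sum.inr (Sum.inr n), F4 n⟩
  exact ⟨Equiv.ofBijective F ⟨hinj, hsurj⟩, F1, fun p h => ⟨_, F2 p h⟩, F3, F4⟩

lemma dMatch_le_of_homeo {M N : Type*} [TopologicalSpace M] [CompactSpace M] [ConnectedSpace M]
    [LocallyConnectedSpace M] [TopologicalSpace N] [CompactSpace N] [LocallyConnectedSpace N]
    {φ : M → ℝ} {ψ : N → ℝ} (hφ : Continuous φ) (hψ : Continuous ψ) (h : M ≃ₜ N) {δ : ℝ}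
    (hδ : 0 ≤ δ) (hd : ∀ Q, |φ Q - ψ (h Q)| ≤ δ) : dMatch φ ψ ≤ ENNReal.ofReal δ := by
  have : Nonempty M := inferInstance
  have : Nonempty N := ⟨h this.some⟩
  obtain ⟨P0, -, hP0'⟩ := isCompact_univ.exists_isMinOn Set.univ_nonempty hφ.continuousOn
  have hP0 : ∀ Q, φ P0 ≤ φ Q := fun Q => hP0' (Set.mem_univ Q)
  obtain ⟨Q0, -, hQ0'⟩ := isCompact_univ.exists_isMinOn Set.univ_nonempty hψ.continuousOn
  have hQ0 : ∀ Q, ψ Q0 ≤ ψ Q := fun Q => hQ0' (Set.mem_univ Q)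
  have hk : |φ P0 - ψ Q0| ≤ δ := by
    have h1 := abs_le.1 (hd P0)
    have h2 := abs_le.1 (hd (h.symm Q0))
    rw [h.apply_symm_apply] at h2
    have h3 := hP0 (h.symm Q0)
    have h4 := hQ0 (h P0)
    exact abs_le.2 ⟨by linarith, by linarith⟩
  obtain ⟨P, Q, I, ptP, ptQ, f, g, cP, cQ, fP, fQ, hf, hg, hm, hrf, hrg⟩ :=
    size_match (φ := φ) (ψ := fun Q => ψ (h Q) - δ) hφ
      ((hψ.comp h.continuous).sub continuous_const) (c := 2 * δ) (by linarith)
      (fun Q => by linarith [abs_le.1 (hd Q)]) (fun Q => by linarith [abs_le.1 (hd Q)])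
  obtain ⟨τ, t1, t2, t3, t4⟩ := exists_tau hf hg
  obtain ⟨e, he⟩ := exists_enum (P ⊕ ({q // q ∉ Set.range g} ⊕ ℕ))
  let ptQ' : Q → ℝ × ℝ := fun q => ((ptQ q).1 + δ, (ptQ q).2 + δ)
  have R1 : IsRepSeq φ (fun i => ent (φ P0) ptP (e i)) := by
    refine isRepSeq_of (multInf_pos hφ hP0) ptP ?_ e he
    rintro ⟨b, d⟩
    rw [mult_eq_mm]
    exact fP (b, d)
  have R2 : IsRepSeq ψ (fun i => ent (ψ Q0) ptQ' ((e.trans τ.optionCongr) i)) := by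
    refine isRepSeq_of (multInf_pos hψ hQ0) ptQ' ?_ _ (by simp [he])
    rintro ⟨b, d⟩
    obtain ⟨e'⟩ := fQ (b - δ, d - δ)
    have hmu : mu (GR (fun Q => ψ (h Q) - δ) (fun Q => ψ (h Q) - δ)) (b - δ, d - δ) =
        if (b, d).1 < (b, d).2 then (mult ψ (b, d)).toNat else 0 := by
      unfold mu
      rw [← mult_eq_mm, mult_transport]
      simp
    rw [hmu] at e'
    refine ⟨(Equiv.subtypeEquivRight fun z => ?_).trans e'⟩
    simp only [ptQ', Prod.ext_iff]
    constructor
    · rintro ⟨h1, h2⟩; constructor <;> linarith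
    · rintro ⟨h1, h2⟩; constructor <;> linarith
  have hle : dMatch φ ψ ≤ dMatchSeq (fun i => ent (φ P0) ptP (e i))
      (fun i => ent (ψ Q0) ptQ' ((e.trans τ.optionCongr) i)) := sInf_le ⟨_, _, R1, R2, rfl⟩
  refine hle.trans ?_
  unfold dMatchSeq
  refine (iInf_le _ ⟨id, Function.bijective_id⟩).trans (iSup_le fun i => ?_)
  show eDist (ent (φ P0) ptP (e i)) (ent (ψ Q0) ptQ' (τ.optionCongr (e i))) ≤ _
  rcases e i with _ | (p | q | n)
  · simp only [Equiv.optionCongr_apply, Option.map_none, ent, eDist]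
    simpa using ENNReal.ofReal_le_ofReal hk
  · simp only [Equiv.optionCongr_apply, Option.map_some]
    by_cases hp : p ∈ Set.range f
    · obtain ⟨i, rfl⟩ := hp
      rw [t1]
      simp only [ent, eDist_coe, ptQ']
      apply ENNReal.ofReal_le_ofReal
      obtain ⟨m1, m2, m3, m4⟩ := hm i
      refine (min_le_left _ _).trans (max_le ?_ ?_)
      · exact abs_le.2 ⟨by linarith, by linarith⟩
      · exact abs_le.2 ⟨by linarith, by linarith⟩
    · obtain ⟨w, hw⟩ := t2 p hp
      rw [hw]
      simp only [ent, eDist_coe]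
      apply ENNReal.ofReal_le_ofReal
      refine (min_le_right _ _).trans (max_le ?_ (by simpa using hδ))
      linarith [hrf p hp]
  · simp only [Equiv.optionCongr_apply, Option.map_some, t3]
    simp only [ent, eDist_coe, ptQ']
    apply ENNReal.ofReal_le_ofReal
    refine (min_le_right _ _).trans (max_le (by simpa using hδ) ?_)
    linarith [hrg q.1 q.2]
  · simp only [Equiv.optionCongr_apply, Option.map_some, t4]
    simp only [ent, eDist_coe]
    apply ENNReal.ofReal_le_ofReal
    simpa using hδ

theorem matching_distance_lower_bound_for_natural_pseudodistance
    {M N : Type*} [TopologicalSpace M] [CompactSpace M] [ConnectedSpace M] [LocallyConnectedSpace M] [T2Space M] [TopologicalSpace N] [CompactSpace N] [ConnectedSpace N] [LocallyConnectedSpace N] [T2Space N]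
    {φ : M → ℝ} {ψ : N → ℝ} (hφ : Continuous φ) (hψ : Continuous ψ)
    (hhomeo : Nonempty (M ≃ₜ N)) :
    dMatch φ ψ ≤ ⨅ h : M ≃ₜ N, ⨆ Q : M, ENNReal.ofReal |φ Q - ψ (h Q)| := by
  refine le_iInf fun h => ?_
  by_cases htop : (⨆ Q : M, ENNReal.ofReal |φ Q - ψ (h Q)|) = ⊤
  · rw [htop]; exact le_top
  · rw [← ENNReal.ofReal_toReal htop]
    refine dMatch_le_of_homeo hφ hψ h ENNReal.toReal_nonneg fun Q => ?_
    rw [← ENNReal.ofReal_le_iff_le_toReal htop]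
    exact le_iSup (fun Q : M => ENNReal.ofReal |φ Q - ψ (h Q)|) Q
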